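/- Let G be a finite simple gap-free graph with nonzero 4-path ideal I_4(G), let e = xy be an edge of G, and let G' be the simple graph whose edge ideal equals the squarefree quadratic monomial ideal (I_4(G) : x_x x_y). Then G' is gap-free. -/

import Mathlib

open MvPolynomial

/-! Graph-theoretic definitions -/

/-- A list of vertices is a path in `G`: consecutive vertices are adjacent and all
vertices are distinct. -/
def SimpleGraph.IsPathList {V : Type*} (G : SimpleGraph V) (l : List V) : Prop :=
  l.Chain' G.Adj ∧ l.Nodup

/-- The `t`-path ideal of a graph: the ideal generated by the monomials
`x_{v_1} ⋯ x_{v_t}` where `v_1 ⋯ v_t` is a path on `t` distinct vertices of `G`. -/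
noncomputable def pathIdeal {V K : Type*} [CommRing K] (G : SimpleGraph V) (t : ℕ) :
    Ideal (MvPolynomial V K) :=
  Ideal.span { p | ∃ l : List V, G.IsPathList l ∧ l.length = t ∧ p = (l.map X).prod }

/-- The edge ideal of a graph. -/
noncomputable def edgeIdeal {V K : Type*} [CommRing K] (G : SimpleGraph V) :
    Ideal (MvPolynomial V K) :=
  Ideal.span { p | ∃ u v, G.Adj u v ∧ p = X u * X v }

/-- `G` is gap-free: any two vertex-disjoint edges are joined by an edge. -/
def SimpleGraph.GapFree {V : Type*} (G : SimpleGraph V) : Prop :=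
  ∀ a b c d : V, G.Adj a b → G.Adj c d → a ≠ c → a ≠ d → b ≠ c → b ≠ d →
    (G.Adj a c ∨ G.Adj a d ∨ G.Adj b c ∨ G.Adj b d)

/-- `G` is claw-free: it has no induced `K_{1,3}`. -/
def SimpleGraph.ClawFree {V : Type*} (G : SimpleGraph V) : Prop :=
  ∀ v a b c : V, G.Adj v a → G.Adj v b → G.Adj v c → a ≠ b → a ≠ c → b ≠ c →
    (G.Adj a b ∨ G.Adj a c ∨ G.Adj b c)

/-- `G` is cricket-free: it has no induced cricket. -/
def SimpleGraph.CricketFree {V : Type*} (G : SimpleGraph V) : Prop :=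
  ¬ ∃ w1 w2 w3 w4 w5 : V,
      w1 ≠ w2 ∧ w1 ≠ w3 ∧ w1 ≠ w4 ∧ w1 ≠ w5 ∧ w2 ≠ w3 ∧ w2 ≠ w4 ∧ w2 ≠ w5 ∧
      w3 ≠ w4 ∧ w3 ≠ w5 ∧ w4 ≠ w5 ∧
      G.Adj w1 w3 ∧ G.Adj w2 w3 ∧ G.Adj w3 w4 ∧ G.Adj w3 w5 ∧ G.Adj w4 w5 ∧
      ¬ G.Adj w1 w2 ∧ ¬ G.Adj w1 w4 ∧ ¬ G.Adj w1 w5 ∧ ¬ G.Adj w2 w4 ∧ ¬ G.Adj w2 w5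

/-- `w : Fin n → V` is an induced cycle of length `n` in `H`. -/
def SimpleGraph.IsInducedCycle {V : Type*} (H : SimpleGraph V) {n : ℕ} (w : Fin n → V) :
    Prop :=
  3 ≤ n ∧ Function.Injective w ∧
    ∀ i j : Fin n, H.Adj (w i) (w j) ↔
      ((j : ℕ) = ((i : ℕ) + 1) % n ∨ (i : ℕ) = ((j : ℕ) + 1) % n)

/-- A graph is chordal if it has no induced cycle of length at least four. -/
def SimpleGraph.Chordal {V : Type*} (H : SimpleGraph V) : Prop :=
  ∀ (n : ℕ), 4 ≤ n → ∀ w : Fin n → V, ¬ H.IsInducedCycle w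

/-! Monomial ideals, graded Betti numbers via the Taylor complex, and
Castelnuovo–Mumford regularity. -/

/-- The monomial ideal generated by the monomials with exponent vectors `gens`. -/
noncomputable def monomialSpan {V K : Type*} [CommRing K] {k : ℕ}
    (gens : Fin k → (V →₀ ℕ)) : Ideal (MvPolynomial V K) :=
  Ideal.span (Set.range fun i => monomial (gens i) (1 : K))

/-- The total degree of an exponent vector. -/
def monomialDegree {V : Type*} (m : V →₀ ℕ) : ℕ := m.sum fun _ n => n

/-- `m` is a minimal monomial generator of the monomial ideal `I`. -/
def IsMinimalMonomialGen {V K : Type*} [CommRing K] (I : Ideal (MvPolynomial V K))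
    (m : V →₀ ℕ) : Prop :=
  monomial m (1 : K) ∈ I ∧ ∀ m' : V →₀ ℕ, m' ≤ m → m' ≠ m → monomial m' (1 : K) ∉ I

/-- The lcm of the monomials `gens i`, `i ∈ T`. -/
noncomputable def taylorLcm {V : Type*} {k : ℕ} (gens : Fin k → (V →₀ ℕ))
    (T : Finset (Fin k)) : V →₀ ℕ :=
  T.sup gens

open Classical in
/-- The boundary of a basis element of the Taylor complex of `gens`, tensored with the
residue field `K`: only the terms where the lcm is unchanged survive. -/
noncomputable def taylorBoundary {V K : Type*} [Field K] {k : ℕ}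
    (gens : Fin k → (V →₀ ℕ)) (T : Finset (Fin k)) : Finset (Fin k) →₀ K :=
  ∑ t ∈ T, if taylorLcm gens (T.erase t) = taylorLcm gens T then
      ((-1 : K) ^ (T.filter fun s => s < t).card) • Finsupp.single (T.erase t) (1 : K)
    else 0

/-- The differential of the Taylor complex of `gens` tensored with `K`. -/
noncomputable def taylorDiff {V K : Type*} [Field K] {k : ℕ}
    (gens : Fin k → (V →₀ ℕ)) : (Finset (Fin k) →₀ K) →ₗ[K] (Finset (Fin k) →₀ K) :=
  Finsupp.lsum K fun T =>
    LinearMap.toSpanSingleton K (Finset (Fin k) →₀ K) (taylorBoundary gens T)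

/-- The graded piece of the Taylor complex in homological degree `i` and internal
degree `j`. -/
noncomputable def taylorPiece {V K : Type*} [Field K] {k : ℕ}
    (gens : Fin k → (V →₀ ℕ)) (i j : ℕ) : Submodule K (Finset (Fin k) →₀ K) :=
  Submodule.span K { f | ∃ T : Finset (Fin k), T.card = i ∧
    monomialDegree (taylorLcm gens T) = j ∧ f = Finsupp.single T (1 : K) }

/-- Nonvanishing of the degree-`j` part of the `i`-th homology of the Taylor complex
of `gens` tensored with `K`; since the Taylor complex is a graded free resolution of
`S/I` (where `I` is the ideal generated by the monomials `gens`), this says exactly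
that `Tor_i^S(S/I, K)_j ≠ 0`. -/
noncomputable def taylorHomologyNonzero {V K : Type*} [Field K] {k : ℕ}
    (gens : Fin k → (V →₀ ℕ)) (i j : ℕ) : Prop :=
  ¬ (LinearMap.ker (taylorDiff (K := K) gens) ⊓ taylorPiece (K := K) gens i j ≤
      Submodule.map (taylorDiff (K := K) gens) (taylorPiece (K := K) gens (i + 1) j))

/-- For a monomial ideal `I`, `Tor_i^S(I, K)_j ≠ 0`.  (Since
`Tor_i^S(I,K) ≅ Tor_{i+1}^S(S/I,K)`, this is computed from the Taylor complex on any
family of monomial generators of `I`.) -/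
def IdealTorNonzero {V K : Type*} [Field K] (I : Ideal (MvPolynomial V K))
    (i j : ℕ) : Prop :=
  ∃ (k : ℕ) (gens : Fin k → (V →₀ ℕ)), I = monomialSpan gens ∧
    taylorHomologyNonzero (K := K) gens (i + 1) j

/-- The Castelnuovo–Mumford regularity of a monomial ideal `I`:
`reg I = max { j - i : Tor_i^S(I, K)_j ≠ 0 }`. -/
noncomputable def reg {V K : Type*} [Field K] (I : Ideal (MvPolynomial V K)) : ℕ :=
  sSup { d | ∃ i j : ℕ, IdealTorNonzero I i j ∧ d = j - i }

/-!
Comparing monomials turns the hypothesis on `G'` into combinatorics: `ab` is an edge of `G'` iff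
the four vertices `a, b, x, y` can be ordered into a path of `G`. As `G` is gap-free and `xy` is an
edge, this happens iff `a, b, x, y` are distinct and either `ab` is an edge of `G`, or `a` and `b`
hang from opposite ends of `xy`.

Let `ab` and `cd` be disjoint edges of this graph. If both are edges of `G`, gap-freeness of `G`
joins them. Otherwise one of them, say `ab`, hangs from opposite ends of `xy`, with `a` at `x` and
`b` at `y`. By gap-freeness of `G` again, `c` or `d` is adjacent to `x` or `y`; in `G'` it is then
joined to `b` or to `a`, respectively.
-/

section Monomials

variable {σ R : Type*} [CommSemiring R]

theorem prod_map_X_eq_monomial [DecidableEq σ] (s : Multiset σ) :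
    (s.map X).prod = monomial (Multiset.toFinsupp s) (1 : R) := by
  induction s using Multiset.induction_on with
  | empty => simp
  | cons a s ih =>
    rw [Multiset.map_cons, Multiset.prod_cons, ih, ← Multiset.singleton_add, map_add,
      Multiset.toFinsupp_singleton, X, monomial_mul, one_mul]

theorem prod_map_X_mem_span_iff [Nontrivial R] {S : Set (Multiset σ)} {s : Multiset σ} :
    (s.map X).prod ∈ Ideal.span ((fun t ↦ ((t.map X).prod : MvPolynomial σ R)) '' S) ↔
      ∃ t ∈ S, t ≤ s := by
  classical
  simp only [prod_map_X_eq_monomial]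
  rw [← Set.image_image (fun m ↦ monomial m (1 : R)), mem_ideal_span_monomial_image,
    support_monomial, if_neg one_ne_zero]
  simp only [Finset.mem_singleton, forall_eq, Set.exists_mem_image,
    ← Finsupp.coe_orderIsoMultiset_symm, OrderIso.le_iff_le]

end Monomials

section Ideals

variable {V R : Type*} [CommRing R] {G : SimpleGraph V}

theorem isPathList_iff {l : List V} : G.IsPathList l ↔ l.IsChain G.Adj ∧ l.Nodup :=
  Iff.rfl

theorem isPathList_pair {a b : V} : G.IsPathList [a, b] ↔ G.Adj a b := by
  simpa [isPathList_iff] using SimpleGraph.Adj.ne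

theorem edgeIdeal_eq_pathIdeal_two : edgeIdeal (K := R) G = pathIdeal G 2 := by
  unfold edgeIdeal pathIdeal
  congr 1 with p
  constructor
  · rintro ⟨u, v, huv, rfl⟩
    exact ⟨[u, v], isPathList_pair.2 huv, rfl, by simp⟩
  · rintro ⟨l, hl, hlength, rfl⟩
    obtain ⟨u, v, rfl⟩ := List.length_eq_two.1 hlength
    exact ⟨u, v, isPathList_pair.1 hl, by simp⟩

theorem prod_map_X_mem_pathIdeal_iff [Nontrivial R] {m : List V} {t : ℕ} (hm : m.length = t) :
    (m.map X).prod ∈ pathIdeal (K := R) G t ↔ ∃ l, G.IsPathList l ∧ l.Perm m := by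
  have hspan : pathIdeal (K := R) G t = Ideal.span ((fun s ↦ (s.map X).prod) ''
      ((↑) '' {l : List V | G.IsPathList l ∧ l.length = t} : Set (Multiset V))) := by
    simp [pathIdeal, Set.image, and_assoc, eq_comm]
  have hperm {l : List V} : l.length = t ∧ l.Subperm m ↔ l.Perm m :=
    ⟨fun ⟨hl, hle⟩ ↦ hle.perm_of_length_le (hm.trans hl.symm).le,
      fun h ↦ ⟨h.length_eq.trans hm, h.subperm⟩⟩
  rw [hspan, ← Multiset.prod_coe, ← Multiset.map_coe, prod_map_X_mem_span_iff,
    Set.exists_mem_image]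
  simp only [Set.mem_ofPred_eq, Multiset.coe_le, and_assoc, hperm]

theorem X_mul_X_mem_edgeIdeal_iff [Nontrivial R] {a b : V} :
    X a * X b ∈ edgeIdeal (K := R) G ↔ G.Adj a b := by
  have hprod : (X a * X b : MvPolynomial V R) = ([a, b].map X).prod := by simp
  rw [edgeIdeal_eq_pathIdeal_two, hprod, prod_map_X_mem_pathIdeal_iff (t := 2) rfl]
  simp [List.perm_pair, and_or_left, exists_or, isPathList_pair, G.adj_comm b a]

theorem X_mul_X_mem_colon_pathIdeal_four_iff [Nontrivial R] {a b x y : V} :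
    X a * X b ∈ (pathIdeal (K := R) G 4).colon
        (Ideal.span {X x * X y} : Ideal (MvPolynomial V R)) ↔
      ∃ l, G.IsPathList l ∧ l.Perm [a, b, x, y] := by
  have hprod : (X a * X b * (X x * X y) : MvPolynomial V R) = ([a, b, x, y].map X).prod := by
    simp [mul_assoc]
  rw [Ideal.mem_colon_span_singleton, hprod, prod_map_X_mem_pathIdeal_iff (t := 4) rfl]

end Ideals

/-- The graph of the edges of the colon ideal `(I_4(G) : x_x x_y)`, for an edge `xy` of a gap-free
graph `G`: besides the edges of `G` avoiding `x` and `y`, it joins each neighbour of `x` to each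
neighbour of `y`. Asking `[a, b, x, y]` to have no duplicates says that `a` and `b` are distinct
and avoid the (distinct) vertices `x` and `y`. -/
def edgeColonGraph {V : Type*} (G : SimpleGraph V) (x y : V) : SimpleGraph V where
  Adj a b := [a, b, x, y].Nodup ∧
    (G.Adj a b ∨ G.Adj a x ∧ G.Adj b y ∨ G.Adj a y ∧ G.Adj b x)
  symm := ⟨fun a b ⟨hnodup, hadj⟩ ↦ ⟨(List.Perm.swap b a _).nodup hnodup, by
    rw [G.adj_comm b a]; tauto⟩⟩
  loopless := ⟨fun a ⟨hnodup, _⟩ ↦ by simp at hnodup⟩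

namespace edgeColonGraph

variable {V : Type*} {G : SimpleGraph V} {x y a b c d : V}

theorem adj_of_isPathList {l : List V} (hl : G.IsPathList l) (hperm : l.Perm [a, b, x, y]) :
    (edgeColonGraph G x y).Adj a b := by
  have hnodup := hperm.nodup hl.2
  refine ⟨hnodup, ?_⟩
  obtain ⟨p, q, r, s, rfl⟩ := List.length_eq_four.1 hperm.length_eq
  obtain ⟨hpq, hqr, hrs⟩ : G.Adj p q ∧ G.Adj q r ∧ G.Adj r s := by
    simpa using (isPathList_iff.1 hl).1
  have position {v : V} (hv : v ∈ [a, b, x, y]) : v = p ∨ v = q ∨ v = r ∨ v = s := by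
    simpa using hperm.mem_iff.2 hv
  have ha := position (v := a) (by simp)
  have hb := position (v := b) (by simp)
  have hx := position (v := x) (by simp)
  have hy := position (v := y) (by simp)
  simp only [List.nodup_cons, List.mem_cons, List.not_mem_nil, or_false, not_or] at hnodup
  clear position hperm hl
  -- If `a` and `b` are not consecutive on the path, both have a neighbour on it among `x, y`, and
  -- these neighbours can be chosen different.
  rcases ha with rfl | rfl | rfl | rfl <;> rcases hb with rfl | rfl | rfl | rfl <;>
    grind [SimpleGraph.adj_comm]

theorem adj_end_of_adj (hgap : G.GapFree) (hxy : G.Adj x y)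
    (hcd : (edgeColonGraph G x y).Adj c d) :
    G.Adj c x ∨ G.Adj c y ∨ G.Adj d x ∨ G.Adj d y := by
  obtain ⟨hnodup, hcd | ⟨hcx, -⟩ | ⟨hcy, -⟩⟩ := hcd
  · exact hgap c d x y hcd hxy (by grind) (by grind) (by grind) (by grind)
  · exact .inl hcx
  · exact .inr (.inl hcy)

theorem exists_isPathList (hgap : G.GapFree) (hxy : G.Adj x y)
    (hab : (edgeColonGraph G x y).Adj a b) :
    ∃ l, G.IsPathList l ∧ l.Perm [a, b, x, y] := by
  classical
  have path_of_perm {p q r s : V} (hperm : [p, q, r, s].Perm [a, b, x, y]) (hpq : G.Adj p q)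
      (hqr : G.Adj q r) (hrs : G.Adj r s) : ∃ l, G.IsPathList l ∧ l.Perm [a, b, x, y] :=
    ⟨_, isPathList_iff.2 ⟨by simp [hpq, hqr, hrs], hperm.symm.nodup hab.1⟩, hperm⟩
  obtain hG | ⟨hax, hby⟩ | ⟨hay, hbx⟩ := hab.2
  · rcases adj_end_of_adj hgap hxy hab with hax | hay | hbx | hby
    · exact path_of_perm (by grind) hG.symm hax hxy
    · exact path_of_perm (by grind) hG.symm hay hxy.symm
    · exact path_of_perm (by grind) hG hbx hxy
    · exact path_of_perm (by grind) hG hby hxy.symm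
  · exact path_of_perm (by grind) hax hxy hby.symm
  · exact path_of_perm (by grind) hay hxy.symm hbx.symm

theorem adj_iff_exists_isPathList (hgap : G.GapFree) (hxy : G.Adj x y) :
    (edgeColonGraph G x y).Adj a b ↔ ∃ l, G.IsPathList l ∧ l.Perm [a, b, x, y] :=
  ⟨exists_isPathList hgap hxy, fun ⟨_, hl, hperm⟩ ↦ adj_of_isPathList hl hperm⟩

theorem adj_or_adj_of_opposite (hgap : G.GapFree) (hxy : G.Adj x y)
    (hab : (edgeColonGraph G x y).Adj a b) (hax : G.Adj a x) (hby : G.Adj b y)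
    (hcd : (edgeColonGraph G x y).Adj c d) (hac : a ≠ c) (had : a ≠ d) (hbc : b ≠ c)
    (hbd : b ≠ d) :
    (edgeColonGraph G x y).Adj a c ∨ (edgeColonGraph G x y).Adj a d ∨
      (edgeColonGraph G x y).Adj b c ∨ (edgeColonGraph G x y).Adj b d := by
  have hab_nodup := hab.1
  have hcd_nodup := hcd.1
  rcases adj_end_of_adj hgap hxy hcd with hcx | hcy | hdx | hdy
  · exact .inr (.inr (.inl ⟨by grind, .inr (.inr ⟨hby, hcx⟩)⟩))
  · exact .inl ⟨by grind, .inr (.inl ⟨hax, hcy⟩)⟩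
  · exact .inr (.inr (.inr ⟨by grind, .inr (.inr ⟨hby, hdx⟩)⟩))
  · exact .inr (.inl ⟨by grind, .inr (.inl ⟨hax, hdy⟩)⟩)

theorem gapFree (hgap : G.GapFree) (hxy : G.Adj x y) : (edgeColonGraph G x y).GapFree := by
  intro a b c d hab hcd hac had hbc hbd
  have hab_nodup := hab.1
  have hcd_nodup := hcd.1
  obtain hGab | ⟨hax, hby⟩ | ⟨hay, hbx⟩ := hab.2
  · obtain hGcd | ⟨hcx, hdy⟩ | ⟨hcy, hdx⟩ := hcd.2
    · rcases hgap a b c d hGab hGcd hac had hbc hbd with hG | hG | hG | hG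
      · exact .inl ⟨by grind, .inl hG⟩
      · exact .inr (.inl ⟨by grind, .inl hG⟩)
      · exact .inr (.inr (.inl ⟨by grind, .inl hG⟩))
      · exact .inr (.inr (.inr ⟨by grind, .inl hG⟩))
    · have := adj_or_adj_of_opposite hgap hxy hcd hcx hdy hab hac.symm hbc.symm had.symm hbd.symm
      grind [SimpleGraph.adj_comm]
    · have := adj_or_adj_of_opposite hgap hxy hcd.symm hdx hcy hab had.symm hbd.symm hac.symm
        hbc.symm
      grind [SimpleGraph.adj_comm]
  · exact adj_or_adj_of_opposite hgap hxy hab hax hby hcd hac had hbc hbd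
  · have := adj_or_adj_of_opposite hgap hxy hab.symm hbx hay hcd hbc hbd hac had
    tauto

end edgeColonGraph

theorem eq_edgeColonGraph_of_edgeIdeal_eq_colon {V R : Type*} [CommRing R] [Nontrivial R]
    {G G' : SimpleGraph V} (hgap : G.GapFree) {x y : V} (hxy : G.Adj x y)
    (hG' : edgeIdeal (K := R) G' = (pathIdeal (K := R) G 4).colon
      (Ideal.span {X x * X y} : Ideal (MvPolynomial V R))) :
    G' = edgeColonGraph G x y := by
  ext a b
  rw [← X_mul_X_mem_edgeIdeal_iff (R := R), hG', X_mul_X_mem_colon_pathIdeal_four_iff,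
    edgeColonGraph.adj_iff_exists_isPathList hgap hxy]

theorem stmt5_general {V R : Type*} [CommRing R] [Nontrivial R] (G : SimpleGraph V)
    (hgap : G.GapFree) (x y : V) (hxy : G.Adj x y) (G' : SimpleGraph V)
    (hG' : edgeIdeal (K := R) G' = (pathIdeal (K := R) G 4).colon
      (Ideal.span {X x * X y} : Ideal (MvPolynomial V R))) :
    G'.GapFree :=
  eq_edgeColonGraph_of_edgeIdeal_eq_colon hgap hxy hG' ▸ edgeColonGraph.gapFree hgap hxy

/-- If `G` is gap-free with `I_4(G) ≠ 0`, `e = xy` is an edge of `G`, and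
`G'` is the simple graph whose edge ideal is `(I_4(G) : x_x x_y)`, then `G'` is
gap-free. -/
theorem stmt5 {V K : Type*} [Fintype V] [Field K] (G : SimpleGraph V)
    (hgap : G.GapFree) (h4 : pathIdeal (K := K) G 4 ≠ ⊥)
    (x y : V) (he : G.Adj x y) (G' : SimpleGraph V)
    (hG' : edgeIdeal (K := K) G' =
      Submodule.colon (pathIdeal (K := K) G 4) (Ideal.span {X x * X y} : Ideal (MvPolynomial V K))) :
    G'.GapFree :=
  stmt5_general G hgap x y he G' hG'
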